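/- Let q ∈ ℂ with 0 < |q| < 1, let p be a positive integer, and let y ∈ ℂ with y ≠ 0. Assume the family (i,j) ↦ τ_p(j-i) τ(i-j) y^{i-j} q^{(i+1)j} / ((q;q)_i (q;q)_j) indexed by ℕ×ℕ is absolutely summable, as well as each of the iterated series on the right-hand side below. Then ∑_{i,j≥0} τ_p(j-i) τ(i-j) y^{i-j} q^{(i+1)j} / ((q;q)_i (q;q)_j) = [1/(q;q)_∞] · ( ∑_{n≥0} τ_{p+1}(n) (-q^2/y)^n · ∑_{i≥0} τ(i) q^{(n+1)i} + ∑_{n≥1} τ_{p+1}(-n) (-y/q)^n · ∑_{i≥0} τ(i) q^{(n+1)i} ). -/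

import Mathlib

/-- The finite q-shifted factorial `(a;q)_n = ∏_{k=0}^{n-1} (1 - a q^k)`. -/
noncomputable def qPoch (a q : ℂ) (n : ℕ) : ℂ := ∏ k ∈ Finset.range n, (1 - a * q ^ k)

/-- The infinite q-shifted factorial `(a;q)_∞ = ∏_{k=0}^{∞} (1 - a q^k)`. -/
noncomputable def qPochInf (a q : ℂ) : ℂ := ∏' k : ℕ, (1 - a * q ^ k)

/-- `τ(n) = (-1)^n q^{n(n-1)/2}` for `n : ℤ`. -/
noncomputable def qTauZ (q : ℂ) (n : ℤ) : ℂ := (-1 : ℂ) ^ n * q ^ ((n * (n - 1)) / 2).toNat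

/-- `τ_p(n) = (-1)^n q^{p·n(n-1)/2}` for `n : ℤ`. -/
noncomputable def qTauP (q : ℂ) (p : ℕ) (n : ℤ) : ℂ :=
  (-1 : ℂ) ^ n * q ^ (p * ((n * (n - 1)) / 2).toNat)

/-!
Sort the double series by the diagonals `j - i = d`. On such a diagonal the weight is constant, and
what is left is a power of `q` times the series `A_n(z) = ∑ q^{i²} z^i / ((q;q)_i (q;q)_{i+n})` at
`n = |d|` and `z = q^{n+1}`. Splitting a factor off `(q;q)_{i+n+1}` or off `(q;q)_i` gives two
contiguous relations,
`A_n(z) = A_{n+1}(z) - q^{n+1} A_{n+1}(qz)` and `A_n(z) - A_n(qz) = qz A_{n+1}(q²z)`.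
Together they show that `D_n = A_n(q^n) - A_{n+1}(q^{n+1})` satisfies `D_n = -q^{n+1} D_{n+1}`;
since `D_n → 0`, it vanishes, so `A_n(q^n)` is constant and equals its limit `1/(q;q)_∞`. The second
relation at `z = q^n` now says that `(q;q)_∞ A_n(q^{n+1})` solves `x_n = 1 - q^{n+1} x_{n+1}`, as
does the partial theta function `∑ τ(i) q^{(n+1)i}`. The difference of these two solutions tends to
zero and so vanishes by the same argument.
-/

open Filter Topology

theorem eq_zero_of_eq_mul_succ {R : Type*} [NormedRing R] {a u : ℕ → R} (ha : ∀ n, ‖a n‖ ≤ 1)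
    (hrec : ∀ n, u n = a n * u (n + 1)) (hu : Tendsto u atTop (𝓝 0)) (n : ℕ) : u n = 0 := by
  have hmono : Monotone fun n => ‖u n‖ := monotone_nat_of_le_succ fun n => by
    rw [hrec n]
    exact (norm_mul_le _ _).trans (mul_le_of_le_one_left (norm_nonneg _) (ha n))
  exact norm_le_zero_iff.mp (hmono.ge_of_tendsto (tendsto_zero_iff_norm_tendsto_zero.mp hu) n)

variable {a q z : ℂ}

section QPochhammer

theorem qPoch_succ (a q : ℂ) (n : ℕ) : qPoch a q (n + 1) = qPoch a q n * (1 - a * q ^ n) :=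
  Finset.prod_range_succ _ _

theorem one_sub_mul_pow_ne_zero (ha : ‖a‖ < 1) (hq : ‖q‖ ≤ 1) (k : ℕ) : 1 - a * q ^ k ≠ 0 := by
  have hlt : ‖a * q ^ k‖ < 1 := by
    rw [norm_mul, norm_pow]
    exact mul_lt_one_of_nonneg_of_lt_one_left (norm_nonneg a) ha
      (pow_le_one₀ (norm_nonneg q) hq)
  intro h
  rw [← sub_eq_zero.mp h, norm_one] at hlt
  exact lt_irrefl 1 hlt

theorem qPoch_ne_zero (ha : ‖a‖ < 1) (hq : ‖q‖ ≤ 1) (n : ℕ) : qPoch a q n ≠ 0 :=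
  Finset.prod_ne_zero_iff.mpr fun k _ => one_sub_mul_pow_ne_zero ha hq k

theorem summable_norm_neg_mul_pow (a : ℂ) (hq : ‖q‖ < 1) :
    Summable fun k : ℕ => ‖-(a * q ^ k)‖ := by
  simp only [norm_neg, norm_mul, norm_pow]
  exact (summable_geometric_of_lt_one (norm_nonneg q) hq).mul_left _

theorem qPochInf_ne_zero (ha : ‖a‖ < 1) (hq : ‖q‖ < 1) : qPochInf a q ≠ 0 := by
  simpa only [qPochInf, sub_eq_add_neg] using
    tprod_one_add_ne_zero_of_summable (f := fun k : ℕ => -(a * q ^ k))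
      (fun k => by simpa only [sub_eq_add_neg] using one_sub_mul_pow_ne_zero ha hq.le k)
      (summable_norm_neg_mul_pow a hq)

theorem tendsto_qPoch (a : ℂ) (hq : ‖q‖ < 1) :
    Tendsto (fun n => qPoch a q n) atTop (𝓝 (qPochInf a q)) := by
  simpa only [qPochInf, qPoch, sub_eq_add_neg] using
    (multipliable_one_add_of_summable (summable_norm_neg_mul_pow a hq)).tendsto_prod_tprod_nat

theorem exists_norm_inv_qPoch_le (ha : ‖a‖ < 1) (hq : ‖q‖ < 1) :
    ∃ C : ℝ, ∀ n, ‖(qPoch a q n)⁻¹‖ ≤ C := by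
  obtain ⟨C, hC⟩ := ((tendsto_qPoch a hq).inv₀ (qPochInf_ne_zero ha hq)).norm.bddAbove_range
  exact ⟨C, fun n => hC ⟨n, rfl⟩⟩

end QPochhammer

section DurfeeSeries

/-- The series `A_n(z) = ∑ q^{i²} z^i / ((q;q)_i (q;q)_{i+n})`. At `z = q^n` its terms are the
generating functions of partitions with Durfee rectangle `i × (i + n)`. -/
noncomputable def durfeeSeries (q : ℂ) (n : ℕ) (z : ℂ) : ℂ :=
  ∑' i : ℕ, q ^ i ^ 2 * z ^ i / (qPoch q q i * qPoch q q (i + n))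

theorem exists_norm_durfeeSeries_term_le (hq : ‖q‖ < 1) : ∃ C : ℝ, ∀ (n : ℕ) (z : ℂ) (i : ℕ),
    ‖z‖ ≤ 1 → ‖q ^ i ^ 2 * z ^ i / (qPoch q q i * qPoch q q (i + n))‖ ≤ ‖q‖ ^ i * C := by
  obtain ⟨C, hC⟩ := exists_norm_inv_qPoch_le hq hq
  have hC0 : 0 ≤ C := (norm_nonneg _).trans (hC 0)
  refine ⟨C * C, fun n z i hz => ?_⟩
  have hpow : ‖q‖ ^ i ^ 2 * ‖z‖ ^ i ≤ ‖q‖ ^ i :=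
    (mul_le_of_le_one_right (by positivity) (pow_le_one₀ (norm_nonneg z) hz)).trans
      (pow_le_pow_of_le_one (norm_nonneg q) hq.le (Nat.le_self_pow two_ne_zero i))
  rw [div_eq_mul_inv, mul_inv, norm_mul, norm_mul, norm_mul, norm_pow, norm_pow]
  exact mul_le_mul hpow (mul_le_mul (hC _) (hC _) (norm_nonneg _) hC0) (by positivity)
    (by positivity)

theorem summable_durfeeSeries (hq : ‖q‖ < 1) (n : ℕ) (hz : ‖z‖ ≤ 1) :
    Summable fun i : ℕ => q ^ i ^ 2 * z ^ i / (qPoch q q i * qPoch q q (i + n)) := by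
  obtain ⟨C, hC⟩ := exists_norm_durfeeSeries_term_le hq
  exact .of_norm_bounded ((summable_geometric_of_lt_one (norm_nonneg q) hq).mul_right C)
    fun i => hC n z i hz

theorem durfeeSeries_eq_succ_sub (hq : ‖q‖ < 1) (n : ℕ) (hz : ‖z‖ ≤ 1) :
    durfeeSeries q n z =
      durfeeSeries q (n + 1) z - q ^ (n + 1) * durfeeSeries q (n + 1) (q * z) := by
  have hqz : ‖q * z‖ ≤ 1 := by
    simpa only [norm_mul] using mul_le_one₀ hq.le (norm_nonneg z) hz
  rw [durfeeSeries, durfeeSeries, durfeeSeries, ← tsum_mul_left,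
    ← (summable_durfeeSeries hq _ hz).tsum_sub ((summable_durfeeSeries hq _ hqz).mul_left _)]
  refine tsum_congr fun i => ?_
  have hi := qPoch_ne_zero hq hq.le i
  have hin := qPoch_ne_zero hq hq.le (i + n)
  have hfactor := one_sub_mul_pow_ne_zero hq hq.le (i + n)
  rw [← add_assoc, qPoch_succ]
  field_simp
  ring

theorem durfeeSeries_sub_mul (hq : ‖q‖ < 1) (n : ℕ) (hz : ‖z‖ ≤ 1) :
    durfeeSeries q n z - durfeeSeries q n (q * z) =
      q * z * durfeeSeries q (n + 1) (q ^ 2 * z) := by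
  have hqz : ‖q * z‖ ≤ 1 := by
    simpa only [norm_mul] using mul_le_one₀ hq.le (norm_nonneg z) hz
  have hs := summable_durfeeSeries hq n hz
  have hsq := summable_durfeeSeries hq n hqz
  rw [durfeeSeries, durfeeSeries, durfeeSeries, ← tsum_mul_left, ← hs.tsum_sub hsq,
    (hs.sub hsq).tsum_eq_zero_add]
  simp only [pow_zero, sub_self, zero_add]
  refine tsum_congr fun i => ?_
  have hi := qPoch_ne_zero hq hq.le i
  have hin := qPoch_ne_zero hq hq.le (i + 1 + n)
  have hfactor := one_sub_mul_pow_ne_zero hq hq.le i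
  rw [← add_assoc, add_right_comm i n 1, qPoch_succ q q i]
  field_simp
  ring

theorem tendsto_durfeeSeries (hq : ‖q‖ < 1) {z : ℕ → ℂ} (hz : Tendsto z atTop (𝓝 0)) :
    Tendsto (fun n => durfeeSeries q n (z n)) atTop (𝓝 (1 / qPochInf q q)) := by
  obtain ⟨C, hC⟩ := exists_norm_durfeeSeries_term_le hq
  have hz1 : ∀ᶠ n in atTop, ‖z n‖ ≤ 1 :=
    (tendsto_zero_iff_norm_tendsto_zero.mp hz).eventually_le_const one_pos
  have hterm (i : ℕ) :
      Tendsto (fun n => q ^ i ^ 2 * z n ^ i / (qPoch q q i * qPoch q q (i + n))) atTop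
        (𝓝 (q ^ i ^ 2 * 0 ^ i / (qPoch q q i * qPochInf q q))) := by
    have hpoch : Tendsto (fun n => qPoch q q (i + n)) atTop (𝓝 (qPochInf q q)) := by
      simpa only [add_comm] using (tendsto_add_atTop_iff_nat i).mpr (tendsto_qPoch q hq)
    exact ((hz.pow i).const_mul _).div (hpoch.const_mul _)
      (mul_ne_zero (qPoch_ne_zero hq hq.le i) (qPochInf_ne_zero hq hq))
  have hlim : ∑' i : ℕ, q ^ i ^ 2 * 0 ^ i / (qPoch q q i * qPochInf q q) = 1 / qPochInf q q := by
    rw [tsum_eq_single 0 fun i hi => by simp [hi]]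
    simp [qPoch]
  rw [← hlim]
  exact tendsto_tsum_of_dominated_convergence
    ((summable_geometric_of_lt_one (norm_nonneg q) hq).mul_right C) hterm
    (hz1.mono fun n hn i => hC n (z n) i hn)

theorem durfeeSeries_pow_self (hq : ‖q‖ < 1) (n : ℕ) :
    durfeeSeries q n (q ^ n) = 1 / qPochInf q q := by
  have hpow (n : ℕ) : ‖q ^ n‖ ≤ 1 := by
    simpa only [norm_pow] using pow_le_one₀ (norm_nonneg q) hq.le
  have hlim : Tendsto (fun n => durfeeSeries q n (q ^ n)) atTop (𝓝 (1 / qPochInf q q)) :=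
    tendsto_durfeeSeries hq (tendsto_pow_atTop_nhds_zero_of_norm_lt_one hq)
  have hstep : ∀ n, durfeeSeries q n (q ^ n) - durfeeSeries q (n + 1) (q ^ (n + 1)) = 0 := by
    refine eq_zero_of_eq_mul_succ (a := fun n => -q ^ (n + 1))
      (fun n => by simpa only [norm_neg] using hpow (n + 1)) (fun n => ?_)
      (by simpa only [sub_self] using hlim.sub ((tendsto_add_atTop_iff_nat 1).mpr hlim))
    have h₁ := durfeeSeries_eq_succ_sub hq n (hpow n)
    have h₂ := durfeeSeries_sub_mul hq (n + 1) (hpow n)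
    rw [← pow_succ'] at h₁ h₂
    rw [← pow_add, add_comm 2 n] at h₂
    linear_combination h₁ + h₂
  exact sub_eq_zero.mp <| eq_zero_of_eq_mul_succ
    (u := fun n => durfeeSeries q n (q ^ n) - 1 / qPochInf q q) (a := 1)
    (fun _ => norm_one.le) (fun n => by simp only [Pi.one_apply, one_mul, sub_eq_zero.mp (hstep n)])
    (by simpa only [sub_self] using hlim.sub_const (1 / qPochInf q q)) n

end DurfeeSeries

section Tau

theorem toNat_neg_mul_neg_sub_one_div_two (n : ℕ) :
    (-(n : ℤ) * (-(n : ℤ) - 1) / 2).toNat = ((n : ℤ) * ((n : ℤ) - 1) / 2).toNat + n := by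
  have hsplit : -(n : ℤ) * (-(n : ℤ) - 1) = (n : ℤ) * ((n : ℤ) - 1) + n * 2 := by ring
  have hnonneg : 0 ≤ (n : ℤ) * ((n : ℤ) - 1) := by
    cases n with
    | zero => simp
    | succ n => push_cast; rw [add_sub_cancel_right]; positivity
  rw [hsplit, Int.add_mul_ediv_right _ _ two_ne_zero]
  omega

theorem qTauZ_eq_qTauP_one (q : ℂ) (n : ℤ) : qTauZ q n = qTauP q 1 n := by
  rw [qTauZ, qTauP, one_mul]

theorem qTauP_neg (q : ℂ) (p n : ℕ) : qTauP q p (-(n : ℤ)) = q ^ (p * n) * qTauP q p n := by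
  rw [qTauP, qTauP, toNat_neg_mul_neg_sub_one_div_two, zpow_neg, ← inv_zpow, inv_neg_one]
  ring

theorem qTauP_mul_qTauZ (q : ℂ) (p : ℕ) (n : ℤ) :
    qTauP q p n * qTauZ q n = (-1) ^ n * qTauP q (p + 1) n := by
  simp only [qTauP, qTauZ]
  ring

theorem qTauZ_neg (q : ℂ) (n : ℕ) : qTauZ q (-(n : ℤ)) = q ^ n * qTauZ q n := by
  rw [qTauZ_eq_qTauP_one, qTauZ_eq_qTauP_one, qTauP_neg, one_mul]

theorem qTauZ_natCast_succ (q : ℂ) (n : ℕ) :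
    qTauZ q ((n + 1 : ℕ) : ℤ) = -(q ^ n * qTauZ q n) := by
  have hreflect : ((n + 1 : ℕ) : ℤ) * (((n + 1 : ℕ) : ℤ) - 1) = -(n : ℤ) * (-(n : ℤ) - 1) := by
    push_cast; ring
  rw [qTauZ, qTauZ, hreflect, toNat_neg_mul_neg_sub_one_div_two, zpow_natCast, zpow_natCast]
  ring

theorem norm_qTauZ_le_one (hq : ‖q‖ ≤ 1) (n : ℤ) : ‖qTauZ q n‖ ≤ 1 := by
  rw [qTauZ, norm_mul, norm_zpow, norm_neg, norm_one, one_zpow, one_mul, norm_pow]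
  exact pow_le_one₀ (norm_nonneg q) hq

theorem qTauP_mul_qTauZ_neg_mul_zpow (q y : ℂ) (p n : ℕ) :
    qTauP q p n * qTauZ q (-(n : ℤ)) * y ^ (-(n : ℤ)) * q ^ n =
      qTauP q (p + 1) n * (-q ^ 2 / y) ^ n := by
  have h := qTauP_mul_qTauZ q p n
  rw [zpow_natCast] at h
  rw [qTauZ_neg, zpow_neg, zpow_natCast, neg_div, neg_pow (q ^ 2 / y), div_pow]
  linear_combination q ^ n * q ^ n * (y ^ n)⁻¹ * h

theorem qTauP_neg_mul_qTauZ_mul_zpow (hq : q ≠ 0) (y : ℂ) (p n : ℕ) :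
    qTauP q p (-(n : ℤ)) * qTauZ q n * y ^ (n : ℤ) =
      qTauP q (p + 1) (-(n : ℤ)) * (-y / q) ^ n := by
  have h := qTauP_mul_qTauZ q p n
  have hqn : q ^ n * (q ^ n)⁻¹ = 1 := mul_inv_cancel₀ (pow_ne_zero n hq)
  rw [zpow_natCast] at h
  rw [qTauP_neg, qTauP_neg, zpow_natCast, neg_div, neg_pow (y / q), div_pow, add_one_mul, pow_add]
  linear_combination q ^ (p * n) * y ^ n * h -
    q ^ (p * n) * (-1) ^ n * y ^ n * qTauP q (p + 1) n * hqn

end Tau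

section PartialTheta

/-- The partial theta function `∑ τ(i) z^i`, summed over `i ≥ 0` only. -/
noncomputable def partialTheta (q z : ℂ) : ℂ := ∑' i : ℕ, qTauZ q (i : ℤ) * z ^ i

theorem norm_qTauZ_mul_pow_le (hq : ‖q‖ ≤ 1) (z : ℂ) (i : ℕ) :
    ‖qTauZ q (i : ℤ) * z ^ i‖ ≤ ‖z‖ ^ i := by
  rw [norm_mul, norm_pow]
  exact mul_le_of_le_one_left (by positivity) (norm_qTauZ_le_one hq i)

theorem summable_partialTheta (hq : ‖q‖ ≤ 1) (hz : ‖z‖ < 1) :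
    Summable fun i : ℕ => qTauZ q (i : ℤ) * z ^ i :=
  .of_norm_bounded (summable_geometric_of_lt_one (norm_nonneg z) hz) (norm_qTauZ_mul_pow_le hq z)

theorem partialTheta_eq_one_sub (hq : ‖q‖ ≤ 1) (hz : ‖z‖ < 1) :
    partialTheta q z = 1 - z * partialTheta q (q * z) := by
  rw [partialTheta, partialTheta, (summable_partialTheta hq hz).tsum_eq_zero_add, ← tsum_mul_left,
    sub_eq_add_neg, ← tsum_neg]
  congr 1
  · simp [qTauZ]
  · refine tsum_congr fun i => ?_
    rw [qTauZ_natCast_succ]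
    ring

theorem tendsto_partialTheta_nhds_zero (hq : ‖q‖ ≤ 1) :
    Tendsto (partialTheta q) (𝓝 0) (𝓝 1) := by
  have hlim : ∑' i : ℕ, qTauZ q (i : ℤ) * 0 ^ i = 1 := by
    rw [tsum_eq_single 0 fun i hi => by simp [hi]]
    simp [qTauZ]
  have hsmall : ∀ᶠ z : ℂ in 𝓝 0, ‖z‖ ≤ 1 / 2 :=
    (tendsto_zero_iff_norm_tendsto_zero.mp tendsto_id).eventually_le_const one_half_pos
  rw [← hlim]
  exact tendsto_tsum_of_dominated_convergence summable_geometric_two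
    (fun i => (tendsto_id.pow i).const_mul _)
    (hsmall.mono fun z hz i => (norm_qTauZ_mul_pow_le hq z i).trans (by gcongr))

theorem durfeeSeries_pow_succ (hq : ‖q‖ < 1) (n : ℕ) :
    durfeeSeries q n (q ^ (n + 1)) = 1 / qPochInf q q * partialTheta q (q ^ (n + 1)) := by
  have hlt (n : ℕ) : ‖q ^ (n + 1)‖ < 1 := by
    simpa only [norm_pow] using pow_lt_one₀ (norm_nonneg q) hq n.succ_ne_zero
  have hpow : Tendsto (fun n => q ^ (n + 1)) atTop (𝓝 0) :=
    (tendsto_pow_atTop_nhds_zero_of_norm_lt_one hq).comp (tendsto_add_atTop_nat 1)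
  have hlim : Tendsto (fun n => durfeeSeries q n (q ^ (n + 1)) -
      1 / qPochInf q q * partialTheta q (q ^ (n + 1))) atTop (𝓝 0) := by
    simpa only [Function.comp_apply, mul_one, sub_self] using (tendsto_durfeeSeries hq hpow).sub
      (((tendsto_partialTheta_nhds_zero hq.le).comp hpow).const_mul (1 / qPochInf q q))
  refine sub_eq_zero.mp (eq_zero_of_eq_mul_succ (a := fun n => -q ^ (n + 1))
    (fun n => by simpa only [norm_neg] using (hlt n).le) (fun n => ?_) hlim n)
  have hqn : ‖q ^ n‖ ≤ 1 := by
    simpa only [norm_pow] using pow_le_one₀ (norm_nonneg q) hq.le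
  have hdurfee := durfeeSeries_sub_mul hq n hqn
  have htheta := partialTheta_eq_one_sub hq.le (hlt n)
  rw [durfeeSeries_pow_self hq, ← pow_succ', ← pow_add, add_comm 2 n] at hdurfee
  rw [← pow_succ'] at htheta
  linear_combination -hdurfee - 1 / qPochInf q q * htheta

end PartialTheta

section Diagonals

/-- The parametrization of `ℕ × ℕ` by diagonals: `(d, k)` is sent to the pair `(i, j)` with
`j - i = d` and `min i j = k`. -/
def diagonalEquiv : ℤ × ℕ ≃ ℕ × ℕ where
  toFun x := (x.2 + (-x.1).toNat, x.2 + x.1.toNat)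
  invFun x := ((x.2 : ℤ) - x.1, min x.1 x.2)
  left_inv x := by ext <;> dsimp only <;> omega
  right_inv x := by ext <;> dsimp only <;> omega

theorem hasSum_diagonal (hq : ‖q‖ < 1) (d : ℤ) :
    HasSum (fun k : ℕ => q ^ ((k + (-d).toNat + 1) * (k + d.toNat)) /
        (qPoch q q (k + (-d).toNat) * qPoch q q (k + d.toNat)))
      (q ^ d.toNat * durfeeSeries q d.natAbs (q ^ (d.natAbs + 1))) := by
  have hpow : ‖q ^ (d.natAbs + 1)‖ ≤ 1 := by
    simpa only [norm_pow] using pow_le_one₀ (norm_nonneg q) hq.le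
  refine ((summable_durfeeSeries hq d.natAbs hpow).hasSum.mul_left _).congr_fun fun k => ?_
  obtain ⟨n, rfl | rfl⟩ := d.eq_nat_or_neg
  · simp only [Int.toNat_natCast, Int.toNat_neg_natCast, Int.natAbs_natCast, add_zero]
    ring
  · simp only [neg_neg, Int.toNat_natCast, Int.toNat_neg_natCast, Int.natAbs_neg,
      Int.natAbs_natCast, add_zero]
    ring

theorem hasSum_int_diagonals (hq : ‖q‖ < 1) {w : ℤ → ℂ} {s : ℂ}
    (hs : HasSum (fun ij : ℕ × ℕ => w ((ij.2 : ℤ) - (ij.1 : ℤ)) * q ^ ((ij.1 + 1) * ij.2) /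
      (qPoch q q ij.1 * qPoch q q ij.2)) s) :
    HasSum (fun d : ℤ => 1 / qPochInf q q *
      (w d * q ^ d.toNat * partialTheta q (q ^ (d.natAbs + 1)))) s := by
  refine (diagonalEquiv.hasSum_iff.mpr hs).prod_fiberwise fun d => ?_
  have hval : 1 / qPochInf q q * (w d * q ^ d.toNat * partialTheta q (q ^ (d.natAbs + 1))) =
      w d * (q ^ d.toNat * durfeeSeries q d.natAbs (q ^ (d.natAbs + 1))) := by
    rw [durfeeSeries_pow_succ hq]
    ring
  rw [hval]
  refine ((hasSum_diagonal hq d).mul_left (w d)).congr_fun fun k => ?_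
  have hd : ((k + d.toNat : ℕ) : ℤ) - ((k + (-d).toNat : ℕ) : ℤ) = d := by omega
  simp only [Function.comp_apply, diagonalEquiv, Equiv.coe_fn_mk, hd, mul_div_assoc]

end Diagonals

theorem stmt13_general (hq : ‖q‖ < 1) (w : ℤ → ℂ)
    (hw : Summable fun ij : ℕ × ℕ => w ((ij.2 : ℤ) - (ij.1 : ℤ)) * q ^ ((ij.1 + 1) * ij.2) /
      (qPoch q q ij.1 * qPoch q q ij.2)) :
    ∑' ij : ℕ × ℕ, w ((ij.2 : ℤ) - (ij.1 : ℤ)) * q ^ ((ij.1 + 1) * ij.2) /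
        (qPoch q q ij.1 * qPoch q q ij.2) =
      1 / qPochInf q q * ((∑' n : ℕ, w n * q ^ n * partialTheta q (q ^ (n + 1))) +
        ∑' n : ℕ, w (-((n : ℤ) + 1)) * partialTheta q (q ^ (n + 2))) := by
  have hdiag := hasSum_int_diagonals hq hw.hasSum
  have hnat := hdiag.summable.comp_injective Nat.cast_injective
  have hneg := hdiag.summable.comp_injective (i := fun n : ℕ => -((n : ℤ) + 1))
    fun m n h => by simpa using h
  have htoNat (n : ℕ) : (-((n : ℤ) + 1)).toNat = 0 := by omega
  have hnatAbs (n : ℕ) : (-((n : ℤ) + 1)).natAbs = n + 1 := by omega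
  rw [hdiag.unique (hnat.hasSum.of_nat_of_neg_add_one hneg.hasSum), mul_add, ← tsum_mul_left,
    ← tsum_mul_left]
  simp only [Function.comp_apply, Int.toNat_natCast, Int.natAbs_natCast, htoNat, hnatAbs, pow_zero,
    mul_one]

theorem stmt13 (q : ℂ) (hq0 : 0 < ‖q‖) (hq1 : ‖q‖ < 1)
    (p : ℕ) (hp : 0 < p) (y : ℂ) (hy : y ≠ 0)
    (h1 : Summable (fun ij : ℕ × ℕ => ‖qTauP q p ((ij.2 : ℤ) - (ij.1 : ℤ)) *
      qTauZ q ((ij.1 : ℤ) - (ij.2 : ℤ)) * y ^ ((ij.1 : ℤ) - (ij.2 : ℤ)) *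
      q ^ ((ij.1 + 1) * ij.2) / (qPoch q q ij.1 * qPoch q q ij.2)‖))
    (hg : ∀ n : ℕ, Summable (fun i : ℕ => ‖qTauZ q (i : ℤ) * q ^ ((n + 1) * i)‖))
    (h2 : Summable (fun n : ℕ => ‖qTauP q (p + 1) (n : ℤ) * (-q ^ 2 / y) ^ n *
      ∑' i : ℕ, qTauZ q (i : ℤ) * q ^ ((n + 1) * i)‖))
    (h3 : Summable (fun n : ℕ => ‖qTauP q (p + 1) (-((n : ℤ) + 1)) * (-y / q) ^ (n + 1) *
      ∑' i : ℕ, qTauZ q (i : ℤ) * q ^ ((n + 2) * i)‖)) :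
    ∑' ij : ℕ × ℕ, qTauP q p ((ij.2 : ℤ) - (ij.1 : ℤ)) *
      qTauZ q ((ij.1 : ℤ) - (ij.2 : ℤ)) * y ^ ((ij.1 : ℤ) - (ij.2 : ℤ)) *
      q ^ ((ij.1 + 1) * ij.2) / (qPoch q q ij.1 * qPoch q q ij.2)
    = (1 / qPochInf q q) *
      ((∑' n : ℕ, qTauP q (p + 1) (n : ℤ) * (-q ^ 2 / y) ^ n *
          ∑' i : ℕ, qTauZ q (i : ℤ) * q ^ ((n + 1) * i))
      + ∑' n : ℕ, qTauP q (p + 1) (-((n : ℤ) + 1)) * (-y / q) ^ (n + 1) *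
          ∑' i : ℕ, qTauZ q (i : ℤ) * q ^ ((n + 2) * i)) := by
  have hneg (n : ℕ) := qTauP_neg_mul_qTauZ_mul_zpow (norm_pos_iff.mp hq0) y p (n + 1)
  simpa only [neg_sub, neg_neg, qTauP_mul_qTauZ_neg_mul_zpow, ← Nat.cast_add_one, hneg,
    partialTheta, ← pow_mul] using
    stmt13_general hq1 (fun d => qTauP q p d * qTauZ q (-d) * y ^ (-d))
      (by simpa only [neg_sub] using h1.of_norm)
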